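/- For every positive integer n, the following identity of rational numbers holds: Σ_{d=1}^{n} Σ_{ℓ=1+d}^{2n+1-d} Σ_{i_1=ℓ+d}^{2n+1} Σ_{l_1=1}^{ℓ-d} (4n+1-i_1)(i_1-ℓ-d+1)(ℓ-d-l_1+1) = (256n^7 + 1512n^6 + 2884n^5 + 1575n^4 - 686n^3 - 567n^2 + 66n)/2520. -/

import Mathlib

/-!
The four sums are evaluated from the inside out. At each stage the summand is a polynomial in the
summation variable, so the sum telescopes (`sum_Icc_telescope`) once a polynomial antidifference is
known. With `s = ℓ + d` and `m = ℓ - d` the two inner sums give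
`m (m + 1) / 2 * M (M + 1) (8n + 1 - s) / 6`, where `M = 2n + 2 - s`. Summing over `ℓ`, a
Vandermonde-type convolution, gives `C(2n + 5 - 2d, 5) (7n - d) / 3`; in terms of `e = n - d` this
is `C(2e + 5, 5) (6n + e) / 3`, which is finally summed over `0 ≤ e < n`. The antidifferences for
the two outer sums are linear combinations of the power-sum polynomials `powSum k`.
-/

/-- Telescoping over an integer interval. The interval may be empty provided `b = a - 1`. -/
lemma sum_Icc_telescope (f F : ℤ → ℚ) (h : ∀ i, f i = F i - F (i - 1)) (a b : ℤ)
    (hab : a - 1 ≤ b) : ∑ i ∈ Finset.Icc a b, f i = F b - F (a - 1) := by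
  induction b, hab using Int.leInduction with
  | base => simp
  | succ b hb ih =>
    have hI : Finset.Icc a (b + 1) = insert (b + 1) (Finset.Icc a b) := by
      ext x
      simp only [Finset.mem_Icc, Finset.mem_insert]
      omega
    rw [hI, Finset.sum_insert (by simp), ih, h (b + 1), add_sub_cancel_right]
    ring

/-- For `k ≤ 6`, the polynomial `S` with `S x - S (x - 1) = x ^ k` and `S 0 = 0`
(and `0` for `k > 6`). -/
def powSum : ℕ → ℚ → ℚ
  | 0, x => x
  | 1, x => x * (x + 1) / 2
  | 2, x => x * (x + 1) * (2 * x + 1) / 6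
  | 3, x => x ^ 2 * (x + 1) ^ 2 / 4
  | 4, x => x * (x + 1) * (2 * x + 1) * (3 * x ^ 2 + 3 * x - 1) / 30
  | 5, x => x ^ 2 * (x + 1) ^ 2 * (2 * x ^ 2 + 2 * x - 1) / 12
  | 6, x => x * (x + 1) * (2 * x + 1) * (3 * x ^ 4 + 6 * x ^ 3 - 3 * x + 1) / 42
  | _, _ => 0

lemma sum_l1 (A : ℚ) (m : ℤ) (hm : 0 ≤ m) :
    ∑ l ∈ Finset.Icc (1 : ℤ) m, A * ((m : ℚ) - l + 1) = A * (m * (m + 1) / 2) := by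
  rw [sum_Icc_telescope _ (fun l => A * (l * (m + 1) - l * (l + 1) / 2)) _ _ _ (by omega)]
  · push_cast
    ring
  · intro i
    push_cast
    ring

lemma sum_i1 (B : ℚ) (n s : ℤ) (hs : s ≤ 2 * n + 1) :
    ∑ i ∈ Finset.Icc s (2 * n + 1), (4 * (n : ℚ) + 1 - i) * (i - s + 1) * B
      = (2 * n + 2 - s) * (2 * n + 3 - s) * (8 * n + 1 - s) / 6 * B := by
  -- In terms of `j = i - s + 1` the summand is `j * (4n + 2 - s - j)`.
  rw [sum_Icc_telescope _ (fun i => ((4 * n + 2 - s) * powSum 1 (i - s + 1)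
    - powSum 2 (i - s + 1)) * B) _ _ _ (by omega)]
  · simp only [powSum]
    push_cast
    ring
  · intro i
    simp only [powSum]
    push_cast
    ring

lemma sum_ell (n d : ℤ) (hd : d ≤ n) :
    ∑ ℓ ∈ Finset.Icc (1 + d) (2 * n + 1 - d),
      (2 * (n : ℚ) + 2 - (ℓ + d)) * (2 * n + 3 - (ℓ + d)) * (8 * n + 1 - (ℓ + d)) / 6
        * (((ℓ : ℚ) - d) * (ℓ - d + 1) / 2)
      = (2 * (n - d) + 1) * (2 * (n - d) + 2) * (2 * (n - d) + 3) * (2 * (n - d) + 4)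
        * (2 * (n - d) + 5) * (7 * n - d) / 360 := by
  -- In terms of `m = ℓ - d` the summand is `m (m + 1) (Q - m) (Q + 1 - m) (R - m) / 12`.
  obtain ⟨Q, hQ⟩ : ∃ Q : ℚ, Q = 2 * n + 2 - 2 * d := ⟨_, rfl⟩
  obtain ⟨R, hR⟩ : ∃ R : ℚ, R = 8 * n + 1 - 2 * d := ⟨_, rfl⟩
  rw [sum_Icc_telescope _ (fun ℓ => (Q * (Q + 1) * R * powSum 1 (ℓ - d)
    + (Q * (Q + 1) * R - (2 * Q + 1) * R - Q * (Q + 1)) * powSum 2 (ℓ - d)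
    + (R + (2 * Q + 1) - (2 * Q + 1) * R - Q * (Q + 1)) * powSum 3 (ℓ - d)
    + (R + 2 * Q) * powSum 4 (ℓ - d) - powSum 5 (ℓ - d)) / 12) _ _ _ (by omega)]
  · subst hQ hR
    simp only [powSum]
    push_cast
    ring
  · intro i
    subst hQ hR
    simp only [powSum]
    push_cast
    ring

lemma sum_d (n : ℤ) (hn : 0 ≤ n) :
    ∑ d ∈ Finset.Icc (1 : ℤ) n,
      (2 * ((n : ℚ) - d) + 1) * (2 * (n - d) + 2) * (2 * (n - d) + 3) * (2 * (n - d) + 4)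
        * (2 * (n - d) + 5) * (7 * n - d) / 360
      = (256*(n:ℚ)^7 + 1512*(n:ℚ)^6 + 2884*(n:ℚ)^5 + 1575*(n:ℚ)^4 - 686*(n:ℚ)^3
          - 567*(n:ℚ)^2 + 66*(n:ℚ))/2520 := by
  -- With `e = n - d`, the product of the five consecutive factors expands to
  -- `32 e^5 + 240 e^4 + 680 e^3 + 900 e^2 + 548 e + 120`, and the last factor is `6 n + e`.
  -- As `e` decreases when `d` grows, the antidifference in `d` is minus that in `e`, at `e - 1`.
  rw [sum_Icc_telescope _ (fun d =>
    -(6 * n * (32 * powSum 5 (n - d - 1) + 240 * powSum 4 (n - d - 1) + 680 * powSum 3 (n - d - 1)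
        + 900 * powSum 2 (n - d - 1) + 548 * powSum 1 (n - d - 1) + 120 * powSum 0 (n - d - 1))
      + (32 * powSum 6 (n - d - 1) + 240 * powSum 5 (n - d - 1) + 680 * powSum 4 (n - d - 1)
        + 900 * powSum 3 (n - d - 1) + 548 * powSum 2 (n - d - 1) + 120 * powSum 1 (n - d - 1)))
      / 360) _ _ _ (by omega)]
  · simp only [powSum]
    push_cast
    ring
  · intro i
    simp only [powSum]
    push_cast
    ring

theorem stmt17 (n : ℕ) (hn : 1 ≤ n) :
    ∑ d ∈ Finset.Icc (1:ℤ) (n:ℤ), ∑ ℓ ∈ Finset.Icc (1+d) (2*n+1-d),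
        ∑ i1 ∈ Finset.Icc (ℓ+d) (2*n+1), ∑ l1 ∈ Finset.Icc (1:ℤ) (ℓ-d),
          (((4*n+1-i1)*(i1-ℓ-d+1)*(ℓ-d-l1+1) : ℤ) : ℚ)
      = (256*(n:ℚ)^7 + 1512*(n:ℚ)^6 + 2884*(n:ℚ)^5 + 1575*(n:ℚ)^4 - 686*(n:ℚ)^3
          - 567*(n:ℚ)^2 + 66*(n:ℚ))/2520 := by
  have key := sum_d n (by omega)
  rw [Int.cast_natCast] at key
  rw [← key]
  refine Finset.sum_congr rfl fun d hd => ?_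
  rw [Finset.mem_Icc] at hd
  have hell := sum_ell n d hd.2
  rw [Int.cast_natCast] at hell
  rw [← hell]
  refine Finset.sum_congr rfl fun ℓ hℓ => ?_
  rw [Finset.mem_Icc] at hℓ
  have hi := sum_i1 (((ℓ : ℚ) - d) * (ℓ - d + 1) / 2) n (ℓ + d) (by omega)
  push_cast at hi
  rw [← hi]
  refine Finset.sum_congr rfl fun i _ => ?_
  have hl := sum_l1 ((4 * (n : ℚ) + 1 - i) * (i - (ℓ + d) + 1)) (ℓ - d) (by omega)
  push_cast at hl
  rw [← hl]
  refine Finset.sum_congr rfl fun l _ => ?_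
  push_cast
  ring
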